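/- arXiv:1607.05132 — 3 statements merged into one kernel-verified Lean document; each statement's English description precedes it below -/
import Mathlib

section
/- There exists a universal constant C > 0 such that the following holds for all integers k ≥ 2 and L ≥ 1. Consider any process on an initially empty collection of k piles of stones that proceeds in rounds as follows: in each round, a pile currently holding the maximum number of stones among the remaining piles is removed (together with all stones it contains), and then a total of at most L new stones are distributed arbitrarily among the remaining piles; the process ends when no pile remains. Then at every point during the process, every pile holds at most C·L·log k stones. -/
/-!
A bound on the largest pile alone does not propagate through the rounds, so bound the average over
an arbitrary set `S` of active piles instead. Adding to `S` a pile of maximal size does not lower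
its average. Hence the average over `S` after a round exceeds the average over `insert m S` before
it, where `m` is the pile removed, by at most `L / #S`. Following a single pile backwards, the sets
have `1, 2, 3, …` elements, so after `r` rounds it holds at most `L * (1 + 1/2 + ⋯ + 1/r)` stones.
-/

section

open scoped BigOperators

variable {ι K : Type*} [DecidableEq ι] [Field K] [LinearOrder K]

theorem expect_le_expect_insert [IsStrictOrderedRing K] {s : Finset ι} {f : ι → K} {m : ι}
    (hs : s.Nonempty) (hmax : ∀ i ∈ s, f i ≤ f m) : 𝔼 i ∈ s, f i ≤ 𝔼 i ∈ insert m s, f i := by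
  by_cases hm : m ∈ s
  · rw [Finset.insert_eq_of_mem hm]
  have h : ((s.card : K) + 1) * 𝔼 i ∈ s, f i ≤ (s.card + 1) * 𝔼 i ∈ insert m s, f i :=
    calc ((s.card : K) + 1) * 𝔼 i ∈ s, f i
        = ∑ i ∈ s, f i + 𝔼 i ∈ s, f i := by rw [add_one_mul, Finset.card_mul_expect]
      _ ≤ ∑ i ∈ s, f i + f m := by gcongr; exact Finset.expect_le hs hmax
      _ = ∑ i ∈ insert m s, f i := by rw [Finset.sum_insert hm, add_comm]
      _ = (s.card + 1) * 𝔼 i ∈ insert m s, f i := by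
        rw [← Finset.card_mul_expect, Finset.card_insert_of_notMem hm, Nat.cast_add_one]
  exact le_of_mul_le_mul_left h (by positivity)

/-- The first `n` rounds of the process: in round `r` the pile `m r`, of maximal size among the
active piles `A r`, is removed, and then each remaining pile `i` receives `d r i` stones, at most
`L` in total. Rounds are numbered from `0`, `c r` gives the sizes of the active piles at the start
of round `r`, and amounts of stones may be fractional. There may be more than `n` piles, and the
values of `c r` and `d r` at removed piles are unconstrained. -/
structure IsPileRun (n : ℕ) (L : K) (A : ℕ → Finset ι) (c d : ℕ → ι → K) (m : ℕ → ι) : Prop where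
  init_eq_zero : ∀ i ∈ A 0, c 0 i = 0
  removed_mem : ∀ r < n, m r ∈ A r
  le_removed : ∀ r < n, ∀ i ∈ A r, c r i ≤ c r (m r)
  active_succ : ∀ r < n, A (r + 1) = A r \ {m r}
  added_nonneg : ∀ r < n, ∀ i ∈ A (r + 1), 0 ≤ d r i
  sum_added_le : ∀ r < n, ∑ i ∈ A (r + 1), d r i ≤ L
  size_succ : ∀ r < n, ∀ i ∈ A (r + 1), c (r + 1) i = c r i + d r i

namespace IsPileRun

variable {n r : ℕ} {L : K} {A : ℕ → Finset ι} {c d : ℕ → ι → K} {m : ℕ → ι} {S : Finset ι}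

theorem subset_sdiff_removed (h : IsPileRun n L A c d m) (hr : r < n) (hS : S ⊆ A (r + 1)) :
    S ⊆ A r ∧ m r ∉ S := by
  rwa [h.active_succ r hr, Finset.subset_sdiff, Finset.disjoint_singleton_right] at hS

variable [IsStrictOrderedRing K]

theorem budget_nonneg (h : IsPileRun n L A c d m) (hn : 0 < n) : 0 ≤ L :=
  (Finset.sum_nonneg (h.added_nonneg 0 hn)).trans (h.sum_added_le 0 hn)

theorem expect_added_le (h : IsPileRun n L A c d m) (hr : r < n) (hS : S ⊆ A (r + 1)) :
    𝔼 i ∈ S, d r i ≤ L / S.card := by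
  rw [Finset.expect_eq_sum_div_card]
  gcongr
  calc ∑ i ∈ S, d r i
      ≤ ∑ i ∈ A (r + 1), d r i :=
        Finset.sum_le_sum_of_subset_of_nonneg hS fun i hi _ => h.added_nonneg r hr i hi
    _ ≤ L := h.sum_added_le r hr

theorem expect_succ_le (h : IsPileRun n L A c d m) (hr : r < n) (hS : S ⊆ A (r + 1))
    (hne : S.Nonempty) :
    𝔼 i ∈ S, c (r + 1) i ≤ 𝔼 i ∈ insert (m r) S, c r i + L / S.card := by
  have hSr : S ⊆ A r := (h.subset_sdiff_removed hr hS).1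
  calc 𝔼 i ∈ S, c (r + 1) i
      = 𝔼 i ∈ S, c r i + 𝔼 i ∈ S, d r i := by
        rw [← Finset.expect_add_distrib]
        exact Finset.expect_congr rfl fun i hi => h.size_succ r hr i (hS hi)
    _ ≤ 𝔼 i ∈ insert (m r) S, c r i + L / S.card :=
        add_le_add (expect_le_expect_insert hne fun i hi => h.le_removed r hr i (hSr hi))
          (h.expect_added_le hr hS)

theorem expect_le (h : IsPileRun n L A c d m) (hr : r ≤ n) (hS : S ⊆ A r) (hne : S.Nonempty) :
    𝔼 i ∈ S, c r i ≤ L * ∑ t ∈ Finset.Ico S.card (S.card + r), (t : K)⁻¹ := by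
  induction r generalizing S with
  | zero => simp [Finset.expect_eq_zero fun i hi => h.init_eq_zero i (hS hi)]
  | succ r ih =>
    obtain ⟨hSr, hmS⟩ := h.subset_sdiff_removed hr hS
    have hins := ih (Nat.le_of_succ_le hr) (Finset.insert_subset (h.removed_mem r hr) hSr)
      (Finset.insert_nonempty _ _)
    rw [Finset.card_insert_of_notMem hmS] at hins
    calc 𝔼 i ∈ S, c (r + 1) i
        ≤ 𝔼 i ∈ insert (m r) S, c r i + L / S.card := h.expect_succ_le hr hS hne
      _ ≤ L * ∑ t ∈ Finset.Ico (S.card + 1) (S.card + 1 + r), (t : K)⁻¹ + L / S.card := by gcongr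
      _ = L * ∑ t ∈ Finset.Ico S.card (S.card + (r + 1)), (t : K)⁻¹ := by
        rw [Finset.sum_eq_sum_Ico_succ_bot (b := S.card + (r + 1)) (by lia), add_right_comm,
          ← add_assoc]
        ring

theorem le_mul_harmonic (h : IsPileRun n L A c d m) (hr : r ≤ n) {i : ι} (hi : i ∈ A r) :
    c r i ≤ L * harmonic r := by
  have := h.expect_le hr (Finset.singleton_subset_iff.2 hi) (Finset.singleton_nonempty i)
  simpa [harmonic_eq_sum_Icc, add_comm 1 r, Finset.Ico_add_one_right_eq_Icc] using this

end IsPileRun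

theorem harmonic_le_three_mul_log {r k : ℕ} (hk : 2 ≤ k) (hr : r ≤ k) :
    (harmonic r : ℝ) ≤ 3 * Real.log k := by
  have hlog : 1 / 2 ≤ Real.log k :=
    calc (1 / 2 : ℝ) ≤ Real.log 2 := by linarith [Real.log_two_gt_d9]
      _ ≤ Real.log k := by gcongr; exact_mod_cast hk
  have hmono : (harmonic r : ℝ) ≤ harmonic k := by
    unfold harmonic
    gcongr
  linarith [harmonic_le_one_add_log k]

theorem stmt1_general {k : ℕ} (hk : 2 ≤ k) {L : ℝ} {A : ℕ → Finset ι} {c d : ℕ → ι → ℝ}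
    {m : ℕ → ι} (h : IsPileRun k L A c d m) {r : ℕ} (hr : r ≤ k) {i : ι} (hi : i ∈ A r) :
    c r i ≤ 3 * L * Real.log k :=
  calc c r i ≤ L * harmonic r := h.le_mul_harmonic hr hi
    _ ≤ L * (3 * Real.log k) :=
      mul_le_mul_of_nonneg_left (harmonic_le_three_mul_log hk hr) (h.budget_nonneg (by lia))
    _ = 3 * L * Real.log k := by ring

theorem isPileRun_natCast [IsStrictOrderedRing K] {n L : ℕ} {A : ℕ → Finset ι}
    {c d : ℕ → ι → ℕ} {m : ℕ → ι}
    (h0 : ∀ i ∈ A 0, c 0 i = 0)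
    (hm : ∀ r < n, m r ∈ A r)
    (hmax : ∀ r < n, ∀ i ∈ A r, c r i ≤ c r (m r))
    (hA : ∀ r < n, A (r + 1) = A r \ {m r})
    (hd : ∀ r < n, ∑ i ∈ A (r + 1), d r i ≤ L)
    (hc : ∀ r < n, ∀ i ∈ A (r + 1), c (r + 1) i = c r i + d r i) :
    IsPileRun n (L : K) A (fun r i => (c r i : K)) (fun r i => (d r i : K)) m where
  init_eq_zero i hi := by exact_mod_cast h0 i hi
  removed_mem := hm
  le_removed r hr i hi := by exact_mod_cast hmax r hr i hi
  active_succ := hA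
  added_nonneg _ _ _ _ := Nat.cast_nonneg _
  sum_added_le r hr := by exact_mod_cast hd r hr
  size_succ r hr i hi := by exact_mod_cast hc r hr i hi

end


/-- There is a universal constant `C > 0` such that for all `k ≥ 2`, `L ≥ 1`,
in any run of the following process on `k` initially empty piles — in each round `r` a pile
`m r` holding the maximum number of stones among the active piles `A r` is removed, and then
at most `L` new stones are distributed arbitrarily among the remaining piles — every pile
always holds at most `C * L * log k` stones. -/
theorem stmt1 :
    ∃ C : ℝ, 0 < C ∧
      ∀ (k L : ℕ), 2 ≤ k → 1 ≤ L →
        ∀ (A : ℕ → Finset (Fin k)) (c d : ℕ → Fin k → ℕ) (m : ℕ → Fin k),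
          A 0 = Finset.univ →
          (∀ i, c 0 i = 0) →
          (∀ r, r < k → m r ∈ A r) →
          (∀ r, r < k → ∀ i ∈ A r, c r i ≤ c r (m r)) →
          (∀ r, r < k → A (r + 1) = A r \ {m r}) →
          (∀ r, r < k → ∑ i ∈ A (r + 1), d r i ≤ L) →
          (∀ r, r < k → ∀ i ∈ A (r + 1), c (r + 1) i = c r i + d r i) →
          ∀ r, r ≤ k → ∀ i ∈ A r, (c r i : ℝ) ≤ C * (L : ℝ) * Real.log (k : ℝ) := by
  exact ⟨3, by norm_num, fun k L hk _ A c d m _ h0 hm hmax hA hd hc r hr i hi => stmt1_general hk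
    (isPileRun_natCast (fun i _ => h0 i) hm hmax hA hd hc) hr hi⟩
end

section
/- Let G = (V, E) be a finite directed graph with nonnegative edge weights, let v ∈ V, let h ≥ 1 be an integer, and let D ⊆ V with v ∉ D. For every node x for which some path from x to v with at most h hops exists in G, fix a path π(x) from x to v that attains dist^h_G(x, v) and, among all ≤h-hop paths from x to v of length dist^h_G(x, v), has the minimum number of hops. Let U = {x ∈ V\D : π(x) is defined and contains a node of D}. Let H be the graph on node set V\D, with edge weights inherited from G, whose edge set consists of: all edges of G\D leaving a node of U; and, for every node y ∈ (V\D)\U with π(x) defined and y ≠ v, the first edge of π(y). Then for every node s ∈ V\D such that dist_{G\D}(s, v) is attained by a path with at most h hops in G\D, it holds that dist_H(s, v) = dist_{G\D}(s, v). -/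
/-- `IsWalk E l s t`: the nonempty list `l` is the node sequence of a walk from `s` to `t`
in the directed graph with edge relation `E`. -/
def IsWalk {V : Type*} (E : V → V → Prop) (l : List V) (s t : V) : Prop :=
  l ≠ [] ∧ l.head? = some s ∧ l.getLast? = some t ∧ l.Chain' E

/-- The length (total weight) of a walk with node sequence `l` under edge weights `w`. -/
def walkLen {V : Type*} (w : V → V → ℝ) (l : List V) : ℝ :=
  ((l.zip l.tail).map fun e => w e.1 e.2).sum

/-- `edist E w s t`: the distance from `s` to `t`, i.e. the infimum of the lengths of all
walks from `s` to `t` (`⊤` if there is none). -/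
noncomputable def edist {V : Type*} (E : V → V → Prop) (w : V → V → ℝ) (s t : V) : EReal :=
  sInf {x : EReal | ∃ l : List V, IsWalk E l s t ∧ x = (walkLen w l : ℝ)}

/-- `hdist E w h s t`: the `≤ h` hop distance from `s` to `t`, i.e. the infimum of the lengths
of all walks from `s` to `t` with at most `h` edges (`⊤` if there is none). -/
noncomputable def hdist {V : Type*} (E : V → V → Prop) (w : V → V → ℝ) (h : ℕ) (s t : V) :
    EReal :=
  sInf {x : EReal | ∃ l : List V, IsWalk E l s t ∧ l.length ≤ h + 1 ∧ x = (walkLen w l : ℝ)}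

/-!
A walk of minimum length in `G \ D` with at most `h` hops is rerouted one edge at a time. At an
affected node it may be followed, since `H` contains every edge of `G \ D` leaving that node. At an
unaffected node `s` the fixed path `π s` avoids `D`, so it is as short as the given walk, and being
hop-minimal it has at most as many hops; one may therefore switch to it, and its first edge lies in
`H`. In both cases the remainder is again a shortest walk of `G \ D`, with one hop fewer, so the
hop bound is kept throughout and `v` is reached. Once at `v` one may stop: a shortest closed walk
has length zero, because running through it twice is not shorter.
-/

section Walks

variable {V : Type*} {E F : V → V → Prop} {w : V → V → ℝ} {l m : List V} {s t u z : V}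

theorem isWalk_singleton (E : V → V → Prop) (s : V) : IsWalk E [s] s s :=
  ⟨List.cons_ne_nil _ _, rfl, rfl, List.isChain_singleton _⟩

theorem walkLen_singleton (w : V → V → ℝ) (s : V) : walkLen w [s] = 0 := by
  simp [walkLen]

namespace IsWalk

theorem cons (hsz : E s z) (hl : IsWalk E l z t) : IsWalk E (s :: l) s t := by
  obtain ⟨l, rfl⟩ := List.head?_eq_some_iff.1 hl.2.1
  exact ⟨List.cons_ne_nil _ _, rfl, List.getLast?_cons_cons.trans hl.2.2.1,
    List.isChain_cons_cons.2 ⟨hsz, hl.2.2.2⟩⟩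

@[elab_as_elim]
theorem induction {motive : (l : List V) → (s : V) → IsWalk E l s t → Prop}
    (singleton : motive [t] t (isWalk_singleton E t))
    (cons : ∀ s z l (hsz : E s z) (hl : IsWalk E l z t),
      motive l z hl → motive (s :: l) s (hl.cons hsz))
    (hl : IsWalk E l s t) : motive l s hl := by
  obtain ⟨hne, hs, ht, hchain⟩ := hl
  induction l generalizing s with
  | nil => exact absurd rfl hne
  | cons a l ih =>
    obtain rfl : a = s := Option.some.inj hs
    cases l with
    | nil =>
      obtain rfl : a = t := Option.some.inj ht
      exact singleton
    | cons b l =>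
      obtain ⟨hab, hchain⟩ := List.isChain_cons_cons.1 hchain
      rw [List.getLast?_cons_cons] at ht
      exact cons a b _ hab ⟨List.cons_ne_nil _ _, rfl, ht, hchain⟩
        (ih (List.cons_ne_nil _ _) rfl ht hchain)

theorem exists_eq_cons (hl : IsWalk E l s t) (hst : s ≠ t) :
    ∃ z m, l = s :: m ∧ E s z ∧ IsWalk E m z t := by
  induction hl using IsWalk.induction with
  | singleton => exact absurd rfl hst
  | cons s z m hsz hm _ => exact ⟨z, m, rfl, hsz, hm⟩

theorem mono (hEF : E ≤ F) (hl : IsWalk E l s t) : IsWalk F l s t :=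
  ⟨hl.1, hl.2.1, hl.2.2.1, hl.2.2.2.imp hEF⟩

theorem walkLen_cons (w : V → V → ℝ) (s : V) (hl : IsWalk E l z t) :
    walkLen w (s :: l) = w s z + walkLen w l := by
  obtain ⟨l, rfl⟩ := List.head?_eq_some_iff.1 hl.2.1
  simp [walkLen]

theorem exists_walkLen_eq_add (w : V → V → ℝ) (hl : IsWalk E l s t) (hm : IsWalk E m t u) :
    ∃ p, IsWalk E p s u ∧ walkLen w p = walkLen w l + walkLen w m := by
  induction hl using IsWalk.induction with
  | singleton => exact ⟨m, hm, by rw [walkLen_singleton, zero_add]⟩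
  | cons s z l hsz hl ih =>
    obtain ⟨p, hp, hlen⟩ := ih
    exact ⟨s :: p, hp.cons hsz, by rw [hp.walkLen_cons, hl.walkLen_cons, hlen, add_assoc]⟩

theorem edist_le (hl : IsWalk E l s t) : edist E w s t ≤ (walkLen w l : EReal) :=
  sInf_le ⟨l, hl, rfl⟩

end IsWalk

theorem edist_anti (w : V → V → ℝ) (s t : V) (hEF : E ≤ F) : edist F w s t ≤ edist E w s t :=
  sInf_le_sInf fun _ ⟨l, hl, hx⟩ => ⟨l, hl.mono hEF, hx⟩

/-- A walk whose length is minimal among all walks between the same endpoints, that is, one that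
attains `edist E w s t`. -/
structure IsShortest (E : V → V → Prop) (w : V → V → ℝ) (l : List V) (s t : V) : Prop where
  isWalk : IsWalk E l s t
  walkLen_le : ∀ m, IsWalk E m s t → walkLen w l ≤ walkLen w m

theorem IsWalk.isShortest_of_eq_edist (hl : IsWalk E l s t)
    (hdist : (walkLen w l : EReal) = edist E w s t) : IsShortest E w l s t where
  isWalk := hl
  walkLen_le _ hm := EReal.coe_le_coe_iff.1 (hdist.trans_le hm.edist_le)

namespace IsShortest

theorem of_cons (hl : IsShortest E w (s :: l) s t) (hsz : E s z) (htail : IsWalk E l z t) :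
    IsShortest E w l z t where
  isWalk := htail
  walkLen_le m hm := by
    have hle := hl.walkLen_le _ (hm.cons hsz)
    rwa [htail.walkLen_cons, hm.walkLen_cons, add_le_add_iff_left] at hle

theorem walkLen_self (hl : IsShortest E w l s s) : walkLen w l = 0 := by
  have hnonpos : walkLen w l ≤ 0 :=
    (hl.walkLen_le _ (isWalk_singleton E s)).trans_eq (walkLen_singleton w s)
  obtain ⟨p, hp, hlen⟩ := hl.isWalk.exists_walkLen_eq_add w hl.isWalk
  have hdouble := hl.walkLen_le p hp
  linarith

theorem exists_isWalk_of_forall_first_edge {n : ℕ}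
    (hF : ∀ s l, s ≠ t → IsShortest E w l s t → l.length ≤ n →
      ∃ z p, IsShortest E w p s t ∧ p.length ≤ l.length ∧ p.tail.head? = some z ∧ F s z)
    (hl : IsShortest E w l s t) (hn : l.length ≤ n) :
    ∃ p, IsWalk F p s t ∧ walkLen w p = walkLen w l := by
  induction hk : l.length using Nat.strong_induction_on generalizing s l with
  | _ k ih =>
    by_cases hst : s = t
    · subst hst
      exact ⟨[s], isWalk_singleton F s, by rw [walkLen_singleton, hl.walkLen_self]⟩
    obtain ⟨z, p, hp, hpl, hhead, hFsz⟩ := hF s l hst hl hn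
    obtain ⟨z', m, rfl, hEsz, hm⟩ := hp.isWalk.exists_eq_cons hst
    obtain rfl : z' = z := Option.some.inj (hm.2.1.symm.trans hhead)
    have hml : m.length < l.length := hpl
    obtain ⟨q, hq, hqm⟩ := ih m.length (hk ▸ hml) (hp.of_cons hEsz hm) (by omega) rfl
    refine ⟨s :: q, hq.cons hFsz, ?_⟩
    calc walkLen w (s :: q) = walkLen w (s :: m) := by
          rw [hq.walkLen_cons, hm.walkLen_cons, hqm]
      _ = walkLen w l := le_antisymm (hp.walkLen_le l hl.isWalk) (hl.walkLen_le _ hp.isWalk)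

end IsShortest

end Walks

section HopBounded

variable {V : Type*} {E F : V → V → Prop} {w : V → V → ℝ} {h : ℕ} {l p : List V} {s t : V}

/-- There is a walk from `s` to `t` with at most `h` hops; a walk with `h` hops is a list of
`h + 1` nodes. -/
def HopReachable (E : V → V → Prop) (h : ℕ) (s t : V) : Prop :=
  ∃ l, IsWalk E l s t ∧ l.length ≤ h + 1

/-- A `≤ h`-hop walk from `s` to `t` of length `dist^h(s, t)` that has the fewest hops among all
`≤ h`-hop walks of that length. -/
def IsMinHopShortest (E : V → V → Prop) (w : V → V → ℝ) (h : ℕ) (p : List V) (s t : V) : Prop :=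
  IsWalk E p s t ∧ p.length ≤ h + 1 ∧
    (∀ l, IsWalk E l s t → l.length ≤ h + 1 → walkLen w p ≤ walkLen w l) ∧
    (∀ l, IsWalk E l s t → l.length ≤ h + 1 → walkLen w l = walkLen w p → p.length ≤ l.length)

theorem IsMinHopShortest.isShortest_and_length_le (hp : IsMinHopShortest E w h p s t)
    (hFE : F ≤ E) (hpF : IsWalk F p s t) (hl : IsShortest F w l s t) (hlh : l.length ≤ h + 1) :
    IsShortest F w p s t ∧ p.length ≤ l.length := by
  obtain ⟨-, -, hmin, hhops⟩ := hp
  have hlE : IsWalk E l s t := hl.isWalk.mono hFE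
  have hpl : walkLen w p ≤ walkLen w l := hmin l hlE hlh
  exact ⟨⟨hpF, fun m hm => hpl.trans (hl.walkLen_le m hm)⟩,
    hhops l hlE hlh (le_antisymm (hl.walkLen_le p hpF) hpl)⟩

end HopBounded

section Sketch

variable {V : Type*} {E : V → V → Prop} {w : V → V → ℝ} {v : V} {h : ℕ} {D : Set V}
  {π : V → List V} {l : List V} {s t : V}

/-- The edge relation of `G \ D`, on the node type of `G`: the nodes of `D` become isolated. -/
def deleteVerts (E : V → V → Prop) (D : Set V) (u z : V) : Prop :=
  E u z ∧ u ∉ D ∧ z ∉ D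

/-- The set `U` of nodes outside `D` whose fixed path to `v` meets `D`. Since `π x` is a junk value
when `x` cannot reach `v` within `h` hops, such nodes are excluded. -/
def affected (E : V → V → Prop) (v : V) (h : ℕ) (D : Set V) (π : V → List V) : Set V :=
  {x | x ∉ D ∧ HopReachable E h x v ∧ ∃ d ∈ D, d ∈ π x}

/-- The edge relation of the sketch graph `H`: all edges of `G \ D` leaving affected nodes, and the
first edge of the fixed path of each other node. -/
def sketch (E : V → V → Prop) (v : V) (h : ℕ) (D : Set V) (π : V → List V) (u z : V) : Prop :=
  u ∉ D ∧ z ∉ D ∧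
    ((u ∈ affected E v h D π ∧ E u z) ∨
      (u ∉ affected E v h D π ∧ HopReachable E h u v ∧ u ≠ v ∧ (π u).tail.head? = some z))

theorem deleteVerts_le : deleteVerts E D ≤ E :=
  fun _ _ huz => huz.1

theorem IsWalk.deleteVerts (hl : IsWalk E l s t) (hlD : ∀ x ∈ l, x ∉ D) :
    IsWalk (deleteVerts E D) l s t :=
  ⟨hl.1, hl.2.1, hl.2.2.1, hl.2.2.2.imp_of_mem_imp fun a b ha hb hab => ⟨hab, hlD a ha, hlD b hb⟩⟩

theorem sketch_le_deleteVerts (hπ : ∀ x, HopReachable E h x v → IsWalk E (π x) x v) :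
    sketch E v h D π ≤ deleteVerts E D := by
  rintro u z ⟨hu, hz, ⟨-, huz⟩ | ⟨-, hreach, huv, hhead⟩⟩
  · exact ⟨huz, hu, hz⟩
  · obtain ⟨z', m, hπu, huz', hm⟩ := (hπ u hreach).exists_eq_cons huv
    rw [hπu, List.tail_cons, hm.2.1] at hhead
    exact ⟨Option.some.inj hhead ▸ huz', hu, hz⟩

theorem exists_isShortest_first_edge_sketch
    (hπ : ∀ x, HopReachable E h x v → IsMinHopShortest E w h (π x) x v) (hsv : s ≠ v)
    (hl : IsShortest (deleteVerts E D) w l s v) (hlh : l.length ≤ h + 1) :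
    ∃ z p, IsShortest (deleteVerts E D) w p s v ∧ p.length ≤ l.length ∧
      p.tail.head? = some z ∧ sketch E v h D π s z := by
  obtain ⟨z, m, rfl, ⟨hEsz, hsD, hzD⟩, hm⟩ := hl.isWalk.exists_eq_cons hsv
  by_cases hsU : s ∈ affected E v h D π
  · exact ⟨z, s :: m, hl, le_rfl, hm.2.1, hsD, hzD, Or.inl ⟨hsU, hEsz⟩⟩
  have hreach : HopReachable E h s v := ⟨s :: m, hl.isWalk.mono deleteVerts_le, hlh⟩
  have havoid : ∀ x ∈ π s, x ∉ D := fun x hx hxD => hsU ⟨hsD, hreach, x, hxD, hx⟩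
  have hπD : IsWalk (deleteVerts E D) (π s) s v := (hπ s hreach).1.deleteVerts havoid
  obtain ⟨hshort, hlen⟩ := (hπ s hreach).isShortest_and_length_le deleteVerts_le hπD hl hlh
  obtain ⟨y, q, hπs, ⟨-, -, hyD⟩, hq⟩ := hπD.exists_eq_cons hsv
  have hhead : (π s).tail.head? = some y := by rw [hπs, List.tail_cons, hq.2.1]
  exact ⟨y, π s, hshort, hlen, hhead, hsD, hyD, Or.inr ⟨hsU, hreach, hsv, hhead⟩⟩

theorem stmt2_general (hπ : ∀ x, HopReachable E h x v → IsMinHopShortest E w h (π x) x v)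
    (hs : ∃ l, IsWalk (deleteVerts E D) l s v ∧ l.length ≤ h + 1 ∧
      (walkLen w l : EReal) = edist (deleteVerts E D) w s v) :
    edist (sketch E v h D π) w s v = edist (deleteVerts E D) w s v := by
  obtain ⟨l, hl, hlh, hdist⟩ := hs
  obtain ⟨p, hp, hpl⟩ := (hl.isShortest_of_eq_edist hdist).exists_isWalk_of_forall_first_edge
    (fun _ _ => exists_isShortest_first_edge_sketch hπ) hlh
  apply le_antisymm
  · calc edist (sketch E v h D π) w s v ≤ (walkLen w p : EReal) := hp.edist_le
      _ = edist (deleteVerts E D) w s v := by rw [hpl, hdist]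
  · exact edist_anti w s v (sketch_le_deleteVerts fun x hx => (hπ x hx).1)

end Sketch

/-- The sketch graph `H` (edge relation `EH`) built from the fixed
minimum-hop shortest `≤ h`-hop paths `π x` to `v` preserves, for every source `s ∉ D` whose
distance to `v` in `G \ D` (edge relation `ED`) is attained by a walk with at most `h` hops,
the exact distance: `dist_H (s, v) = dist_{G \ D} (s, v)`. -/
theorem stmt2 {V : Type} [Fintype V] [DecidableEq V]
    (E : V → V → Prop) (w : V → V → ℝ) (hw : ∀ u z, E u z → 0 ≤ w u z)
    (v : V) (h : ℕ) (hh : 1 ≤ h) (D : Set V) (hv : v ∉ D)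
    (π : V → List V)
    -- for every `x` admitting a `≤ h`-hop walk to `v`, `π x` is a shortest `≤ h`-hop walk
    -- from `x` to `v` having the minimum number of hops among such shortest walks
    (hπ : ∀ x : V, (∃ l, IsWalk E l x v ∧ l.length ≤ h + 1) →
      IsWalk E (π x) x v ∧ (π x).length ≤ h + 1 ∧
      (∀ l, IsWalk E l x v → l.length ≤ h + 1 → walkLen w (π x) ≤ walkLen w l) ∧
      (∀ l, IsWalk E l x v → l.length ≤ h + 1 → walkLen w l = walkLen w (π x) →
        (π x).length ≤ l.length))
    -- `U` is the set of affected nodes: nodes outside `D` whose fixed path meets `D`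
    (U : Set V)
    (hU : U = {x : V | x ∉ D ∧ (∃ l, IsWalk E l x v ∧ l.length ≤ h + 1) ∧ ∃ d ∈ D, d ∈ π x})
    -- `EH` is the edge relation of the sketch graph `H` on the node set `V \ D`
    (EH : V → V → Prop)
    (hEH : ∀ u z, EH u z ↔ u ∉ D ∧ z ∉ D ∧
      ((u ∈ U ∧ E u z) ∨
        (u ∉ U ∧ (∃ l, IsWalk E l u v ∧ l.length ≤ h + 1) ∧ u ≠ v ∧
          (π u).tail.head? = some z)))
    -- `ED` is the edge relation of the induced subgraph `G \ D`
    (ED : V → V → Prop) (hED : ∀ u z, ED u z ↔ E u z ∧ u ∉ D ∧ z ∉ D) :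
    ∀ s : V, s ∉ D →
      (∃ l, IsWalk ED l s v ∧ l.length ≤ h + 1 ∧ (walkLen w l : EReal) = edist ED w s v) →
      edist EH w s v = edist ED w s v := by
  subst hU
  obtain rfl : ED = deleteVerts E D := funext₂ fun u z => propext (hED u z)
  obtain rfl : EH = sketch E v h D π := funext₂ fun u z => propext (hEH u z)
  exact fun _ _ => stmt2_general hπ
end

section
/- Let n ≥ 2, let c ≥ 1 be a real number, let h ≥ 2, and let G be a directed graph on n nodes with nonnegative edge weights in which, for every ordered pair of nodes (s, t) with t reachable from s, a designated simple shortest path from s to t is fixed. Let C be the random set of nodes obtained by including each of the n nodes independently with probability min(x/(h/2), 1), where x = 3c·ln n + 1. Then with probability at least 1 − 1/n^c, every designated shortest path consisting of at least h/2 edges contains a node of C. -/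
/-!
Since `1 - min y 1 ≤ exp (-y)`, a sample of rate `min (x / m) 1` misses a given set of at least `m`
nodes with probability at most `exp (-(x / m)) ^ m = exp (-x)`. A simple path with at least `h / 2`
edges visits at least `h / 2` distinct nodes, and there are at most `n ^ 2` designated paths, so by
the union bound the sample misses one of them with probability at most
`n ^ 2 * exp (-x) ≤ n ^ (2 - 3 * c) ≤ 1 / n ^ c`.
-/

open MeasureTheory

/-- The Bernoulli measure on `Bool` with success probability `p`. -/
noncomputable def bern (p : ℝ) : Measure Bool :=
  (ENNReal.ofReal p) • Measure.dirac true + (ENNReal.ofReal (1 - p)) • Measure.dirac false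

lemma isProbabilityMeasure_bern {p : ℝ} (hp : p ∈ Set.Icc 0 1) :
    IsProbabilityMeasure (bern p) where
  measure_univ := by
    simp [bern, ← ENNReal.ofReal_add hp.1 (sub_nonneg.2 hp.2)]

lemma bern_singleton_false (p : ℝ) : bern p {false} = ENNReal.ofReal (1 - p) := by
  simp [bern]

lemma min_div_one_mem_Icc {x m : ℝ} (hx : 0 ≤ x) (hm : 0 ≤ m) :
    min (x / m) 1 ∈ Set.Icc 0 1 :=
  ⟨le_min (div_nonneg hx hm) zero_le_one, min_le_right _ _⟩

lemma one_sub_min_one_le_exp_neg (y : ℝ) : 1 - min y 1 ≤ Real.exp (-y) := by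
  rcases le_total y 1 with hy | hy
  · rw [min_eq_left hy]
    exact Real.one_sub_le_exp_neg y
  · rw [min_eq_right hy, sub_self]
    exact (Real.exp_pos _).le

lemma one_sub_min_div_one_pow_le_exp_neg {x m : ℝ} (hx : 0 ≤ x) (hm : 0 < m) {k : ℕ}
    (hk : m ≤ k) : (1 - min (x / m) 1) ^ k ≤ Real.exp (-x) := by
  have hxk : x ≤ k * (x / m) := by
    calc x = m * (x / m) := (mul_div_cancel₀ x hm.ne').symm
      _ ≤ k * (x / m) := by gcongr
  calc (1 - min (x / m) 1) ^ k ≤ Real.exp (-(x / m)) ^ k :=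
        pow_le_pow_left₀ (sub_nonneg.2 (min_le_right _ _)) (one_sub_min_one_le_exp_neg _) k
    _ = Real.exp (-(k * (x / m))) := by rw [← Real.exp_nat_mul, mul_neg]
    _ ≤ Real.exp (-x) := Real.exp_le_exp.2 (neg_le_neg hxk)

lemma sq_mul_exp_neg_le_one_div_rpow {a c : ℝ} (ha : 1 ≤ a) (hc : 1 ≤ c) :
    a ^ 2 * Real.exp (-(3 * c * Real.log a + 1)) ≤ 1 / a ^ c := by
  have ha_pos : 0 < a := one_pos.trans_le ha
  have hlog : Real.log a ≤ c * Real.log a := le_mul_of_one_le_left (Real.log_nonneg ha) hc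
  calc a ^ 2 * Real.exp (-(3 * c * Real.log a + 1))
      = Real.exp (2 * Real.log a + -(3 * c * Real.log a + 1)) := by
        rw [Real.exp_add, two_mul, Real.exp_add, Real.exp_log ha_pos, sq]
    _ ≤ Real.exp (-(Real.log a * c)) := Real.exp_le_exp.2 (by linarith)
    _ = 1 / a ^ c := by rw [Real.rpow_def_of_pos ha_pos, Real.exp_neg, one_div]

lemma ofReal_one_sub_le_measure_of_compl_le {Ω : Type*} [MeasurableSpace Ω] {μ : Measure Ω}
    [IsProbabilityMeasure μ] {A : Set Ω} {ε : ℝ} (hε : 0 ≤ ε) (hA : μ Aᶜ ≤ ENNReal.ofReal ε) :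
    ENNReal.ofReal (1 - ε) ≤ μ A := by
  rw [ENNReal.ofReal_sub _ hε, ENNReal.ofReal_one, tsub_le_iff_right]
  calc 1 = μ Set.univ := measure_univ.symm
    _ ≤ μ A + μ Aᶜ := measure_univ_le_add_compl A
    _ ≤ μ A + ENNReal.ofReal ε := by gcongr

section HittingSet

variable {V ι : Type*} [Fintype V]

lemma pi_bern_forall_mem_eq_false {p : ℝ} (hp : p ∈ Set.Icc 0 1) (S : Finset V) :
    (Measure.pi fun _ : V => bern p) {ω | ∀ u ∈ S, ω u = false} =
      ENNReal.ofReal ((1 - p) ^ S.card) := by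
  have := isProbabilityMeasure_bern hp
  calc (Measure.pi fun _ : V => bern p) {ω | ∀ u ∈ S, ω u = false}
      = ∏ _u ∈ S, bern p {false} := Measure.pi_pi_finset _ (fun _ => {false}) S
    _ = ENNReal.ofReal ((1 - p) ^ S.card) := by
        rw [Finset.prod_const, bern_singleton_false, ENNReal.ofReal_pow (sub_nonneg.2 hp.2)]

variable {x m : ℝ} {I : Finset ι} {S : ι → Finset V}

lemma pi_bern_exists_forall_mem_eq_false_le (hx : 0 ≤ x) (hm : 0 < m)
    (hS : ∀ i ∈ I, m ≤ (S i).card) :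
    (Measure.pi fun _ : V => bern (min (x / m) 1)) {ω | ∃ i ∈ I, ∀ u ∈ S i, ω u = false} ≤
      ENNReal.ofReal (I.card * Real.exp (-x)) := by
  set μ := Measure.pi fun _ : V => bern (min (x / m) 1)
  have miss_le (i : ι) (hi : i ∈ I) :
      μ {ω | ∀ u ∈ S i, ω u = false} ≤ ENNReal.ofReal (Real.exp (-x)) := by
    rw [pi_bern_forall_mem_eq_false (min_div_one_mem_Icc hx hm.le)]
    exact ENNReal.ofReal_le_ofReal (one_sub_min_div_one_pow_le_exp_neg hx hm (hS i hi))
  calc μ {ω | ∃ i ∈ I, ∀ u ∈ S i, ω u = false}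
      = μ (⋃ i ∈ I, {ω | ∀ u ∈ S i, ω u = false}) := by
        congr 1 with ω
        simp only [Set.mem_ofPred_eq, Set.mem_iUnion, exists_prop]
    _ ≤ ∑ i ∈ I, μ {ω | ∀ u ∈ S i, ω u = false} := measure_biUnion_finset_le I _
    _ ≤ I.card • ENNReal.ofReal (Real.exp (-x)) := Finset.sum_le_card_nsmul _ _ _ miss_le
    _ = ENNReal.ofReal (I.card * Real.exp (-x)) := by
        rw [← ENNReal.ofReal_nsmul, nsmul_eq_mul]

lemma ofReal_one_sub_le_pi_bern_forall_exists_mem (hx : 0 ≤ x) (hm : 0 < m)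
    (hS : ∀ i ∈ I, m ≤ (S i).card) :
    ENNReal.ofReal (1 - I.card * Real.exp (-x)) ≤
      (Measure.pi fun _ : V => bern (min (x / m) 1)) {ω | ∀ i ∈ I, ∃ u ∈ S i, ω u = true} := by
  have := isProbabilityMeasure_bern (min_div_one_mem_Icc hx hm.le)
  apply ofReal_one_sub_le_measure_of_compl_le (by positivity)
  simpa [Set.compl_ofPred] using pi_bern_exists_forall_mem_eq_false_le hx hm hS

end HittingSet

theorem stmt3_general {V : Type*} [Fintype V]
    (n : ℕ) (hn : 1 ≤ n) (hcard : Fintype.card V = n)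
    (c : ℝ) (hc : 1 ≤ c) (h : ℝ) (hh : 0 < h)
    (R : V → V → Prop) (P : V → V → List V) (hP : ∀ s t : V, R s t → (P s t).Nodup)
    (x : ℝ) (hx : x = 3 * c * Real.log (n : ℝ) + 1) :
    ENNReal.ofReal (1 - 1 / (n : ℝ) ^ c) ≤
      (Measure.pi fun _ : V => bern (min (x / (h / 2)) 1))
        {ω : V → Bool |
          ∀ s t : V, R s t → h / 2 ≤ (((P s t).length - 1 : ℕ) : ℝ) →
            ∃ u ∈ P s t, ω u = true} := by
  classical
  have hn_one : (1 : ℝ) ≤ n := by exact_mod_cast hn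
  have hx_nonneg : 0 ≤ x := by
    have := Real.log_nonneg hn_one
    rw [hx]
    positivity
  let longPairs : Finset (V × V) := {q | R q.1 q.2 ∧ h / 2 ≤ (((P q.1 q.2).length - 1 : ℕ) : ℝ)}
  have card_longPairs : (longPairs.card : ℝ) ≤ (n : ℝ) ^ 2 := by
    have : longPairs.card ≤ n ^ 2 := by
      simpa [hcard, sq] using longPairs.card_le_univ
    exact_mod_cast this
  have card_nodes (q : V × V) (hq : q ∈ longPairs) : h / 2 ≤ (P q.1 q.2).toFinset.card := by
    obtain ⟨hR, hlong⟩ := (Finset.mem_filter_univ q).1 hq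
    rw [List.toFinset_card_of_nodup (hP _ _ hR)]
    exact hlong.trans (by exact_mod_cast Nat.sub_le _ _)
  have failure_le : longPairs.card * Real.exp (-x) ≤ 1 / (n : ℝ) ^ c :=
    (mul_le_mul_of_nonneg_right card_longPairs (Real.exp_pos _).le).trans
      (hx ▸ sq_mul_exp_neg_le_one_div_rpow hn_one hc)
  calc ENNReal.ofReal (1 - 1 / (n : ℝ) ^ c)
      ≤ ENNReal.ofReal (1 - longPairs.card * Real.exp (-x)) :=
        ENNReal.ofReal_le_ofReal (sub_le_sub_left failure_le 1)
    _ ≤ (Measure.pi fun _ : V => bern (min (x / (h / 2)) 1))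
          {ω | ∀ q ∈ longPairs, ∃ u ∈ (P q.1 q.2).toFinset, ω u = true} :=
        ofReal_one_sub_le_pi_bern_forall_exists_mem hx_nonneg (half_pos hh) card_nodes
    _ = _ := by simp [longPairs]

/-- If each of the `n` nodes is sampled independently with probability
`min (x / (h/2)) 1` where `x = 3 c ln n + 1`, then with probability at least `1 - 1/n^c`
every designated simple shortest path `P s t` with at least `h/2` edges contains a sampled
node. -/
theorem stmt3 {V : Type} [Fintype V] [DecidableEq V]
    (n : ℕ) (hn : 2 ≤ n) (hcard : Fintype.card V = n)
    (c : ℝ) (hc : 1 ≤ c) (h : ℕ) (hh : 2 ≤ h)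
    (E : V → V → Prop) (w : V → V → ℝ) (hw : ∀ u z, E u z → 0 ≤ w u z)
    -- the designated simple shortest paths, fixed for every reachable pair
    (P : V → V → List V)
    (hP : ∀ s t : V, (∃ l, IsWalk E l s t) →
      IsWalk E (P s t) s t ∧ (P s t).Nodup ∧
      ∀ l, IsWalk E l s t → walkLen w (P s t) ≤ walkLen w l)
    (x : ℝ) (hx : x = 3 * c * Real.log (n : ℝ) + 1) :
    ENNReal.ofReal (1 - 1 / (n : ℝ) ^ c) ≤
      (Measure.pi fun _ : V => bern (min (x / ((h : ℝ) / 2)) 1))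
        {ω : V → Bool |
          ∀ s t : V, (∃ l, IsWalk E l s t) →
            (h : ℝ) / 2 ≤ (((P s t).length - 1 : ℕ) : ℝ) →
            ∃ u ∈ P s t, ω u = true} :=
  stmt3_general n (one_le_two.trans hn) hcard c hc h (by positivity) _ P
    (fun s t hst => (hP s t hst).2.1) x hx
end
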